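/- The transfer matrices form a commuting family: for all u, v ∈ ℂ with u ≠ 0 and v ≠ 0, T₁(u)T₁(v) = T₁(v)T₁(u), T₁(u)T₂(v) = T₂(v)T₁(u), and T₂(u)T₂(v) = T₂(v)T₂(u) in End(H). -/

import Mathlib

open Matrix Kronecker BigOperators

/-- Elementary 3×3 matrices `E i j`. -/
noncomputable def Eb (i j : Fin 3) : Matrix (Fin 3) (Fin 3) ℂ :=
  Matrix.single i j 1

/-- Principal gradation trigonometric R-matrix of `U_q(gl₃^)`, with spectral
parameter `λ = u³` parametrized by the cube root `u`. -/
noncomputable def RpM (q u : ℂ) : Matrix (Fin 3 × Fin 3) (Fin 3 × Fin 3) ℂ :=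
  (∑ k : Fin 3, ∑ p : Fin 3,
    if k = p then (u ^ 3 * q - (u ^ 3 * q)⁻¹) • (Eb k k ⊗ₖ Eb k k)
    else (u ^ 3 - (u ^ 3)⁻¹) • (Eb k k ⊗ₖ Eb p p))
  + (q - q⁻¹) • ∑ k : Fin 3, ∑ p : Fin 3,
      (if k < p then
        u ^ ((3 : ℤ) - 2 * (((p : ℕ) : ℤ) - ((k : ℕ) : ℤ))) • (Eb k p ⊗ₖ Eb p k)
        + u ^ (2 * (((p : ℕ) : ℤ) - ((k : ℕ) : ℤ)) - (3 : ℤ)) • (Eb p k ⊗ₖ Eb k p)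
      else 0)

/-- Index type of the quantum space `H = (ℂ³)^{⊗N}`. -/
abbrev HIdx (N : ℕ) := Fin N → Fin 3

/-- `R_{a,b}(u)`: the R-matrix acting on the auxiliary space and the `b`-th
factor of the quantum space, identity elsewhere. -/
noncomputable def Raux (N : ℕ) (q u : ℂ) (b : Fin N) :
    Matrix (Fin 3 × HIdx N) (Fin 3 × HIdx N) ℂ :=
  Matrix.of fun x y =>
    RpM q u (x.1, x.2 b) (y.1, y.2 b) * (if ∀ c, c ≠ b → x.2 c = y.2 c then 1 else 0)

/-- The twist matrix acting on the auxiliary space, identity on `H`. -/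
noncomputable def Kaux (N : ℕ) (K : Matrix (Fin 3) (Fin 3) ℂ) :
    Matrix (Fin 3 × HIdx N) (Fin 3 × HIdx N) ℂ :=
  Matrix.of fun x y => K x.1 y.1 * (if x.2 = y.2 then 1 else 0)

/-- Monodromy matrix `M(u) = K_a R_{a,N}(u/ζ_N) ⋯ R_{a,1}(u/ζ_1)`. -/
noncomputable def Mon (N : ℕ) (q : ℂ) (ζ : Fin N → ℂ) (K : Matrix (Fin 3) (Fin 3) ℂ)
    (u : ℂ) : Matrix (Fin 3 × HIdx N) (Fin 3 × HIdx N) ℂ :=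
  Kaux N K * (((List.finRange N).reverse.map fun b => Raux N q (u / ζ b) b).prod)

/-- Transfer matrix `T₁(u) = tr_a M(u)`. -/
noncomputable def T1 (N : ℕ) (q : ℂ) (ζ : Fin N → ℂ) (K : Matrix (Fin 3) (Fin 3) ℂ)
    (u : ℂ) : Matrix (HIdx N) (HIdx N) ℂ :=
  Matrix.of fun f g => ∑ i : Fin 3, Mon N q ζ K u (i, f) (i, g)

/-- The q-antisymmetric projector `P⁻ = R_q(p⁻¹)/(2(q⁻¹ − q))`. -/
noncomputable def Pm (q p : ℂ) : Matrix (Fin 3 × Fin 3) (Fin 3 × Fin 3) ℂ :=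
  (2 * (q⁻¹ - q))⁻¹ • RpM q p⁻¹

/-- Embedding of an operator on (auxiliary space a) ⊗ H into
(aux a) ⊗ (aux b) ⊗ H, identity on aux b. -/
noncomputable def embA (N : ℕ) (M : Matrix (Fin 3 × HIdx N) (Fin 3 × HIdx N) ℂ) :
    Matrix (Fin 3 × Fin 3 × HIdx N) (Fin 3 × Fin 3 × HIdx N) ℂ :=
  Matrix.of fun x y => M (x.1, x.2.2) (y.1, y.2.2) * (if x.2.1 = y.2.1 then 1 else 0)

/-- Embedding of an operator on (auxiliary space b) ⊗ H into
(aux a) ⊗ (aux b) ⊗ H, identity on aux a. -/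
noncomputable def embB (N : ℕ) (M : Matrix (Fin 3 × HIdx N) (Fin 3 × HIdx N) ℂ) :
    Matrix (Fin 3 × Fin 3 × HIdx N) (Fin 3 × Fin 3 × HIdx N) ℂ :=
  Matrix.of fun x y => M (x.2.1, x.2.2) (y.2.1, y.2.2) * (if x.1 = y.1 then 1 else 0)

/-- Embedding of an operator on (aux a) ⊗ (aux b) into (aux a) ⊗ (aux b) ⊗ H. -/
noncomputable def embP (N : ℕ) (P : Matrix (Fin 3 × Fin 3) (Fin 3 × Fin 3) ℂ) :
    Matrix (Fin 3 × Fin 3 × HIdx N) (Fin 3 × Fin 3 × HIdx N) ℂ :=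
  Matrix.of fun x y => P (x.1, x.2.1) (y.1, y.2.1) * (if x.2.2 = y.2.2 then 1 else 0)

/-- Fused transfer matrix `T₂(u) = tr_{ab}(P⁻_{ab} M_b(u) M_a(u/p))`. -/
noncomputable def T2 (N : ℕ) (q p : ℂ) (ζ : Fin N → ℂ) (K : Matrix (Fin 3) (Fin 3) ℂ)
    (u : ℂ) : Matrix (HIdx N) (HIdx N) ℂ :=
  Matrix.of fun f g => ∑ ia : Fin 3, ∑ ib : Fin 3,
    (embP N (Pm q p) * embB N (Mon N q ζ K u) * embA N (Mon N q ζ K (u / p)))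
      (ia, ib, f) (ia, ib, g)

/-- The matrix entries of `RpM` that preserve the pair of basis vectors. -/
noncomputable def rDiag (q w : ℂ) (i j : Fin 3) : ℂ :=
  if i = j then w ^ 3 * q - (w ^ 3 * q)⁻¹ else w ^ 3 - (w ^ 3)⁻¹

/-- The matrix entries of `RpM` that swap two distinct basis vectors. -/
noncomputable def rSwap (q w : ℂ) (i j : Fin 3) : ℂ :=
  if i < j then (q - q⁻¹) * w ^ ((3 : ℤ) - 2 * (((j : ℕ) : ℤ) - ((i : ℕ) : ℤ)))
  else if j < i then (q - q⁻¹) * w ^ (2 * (((i : ℕ) : ℤ) - ((j : ℕ) : ℤ)) - (3 : ℤ))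
  else 0

theorem RpM_apply (q w : ℂ) (i j k l : Fin 3) :
    RpM q w (i, j) (k, l) =
      (if i = k ∧ j = l then rDiag q w i j else 0) +
        (if i = l ∧ j = k then rSwap q w i j else 0) := by
  simp only [RpM, Eb, Matrix.add_apply, Matrix.smul_apply, Fin.sum_univ_three]
  fin_cases i <;> fin_cases j <;>
    simp [rDiag, rSwap] <;> fin_cases k <;> fin_cases l <;> simp

theorem sum_RpM_mul (q w : ℂ) (i j : Fin 3) (F : Fin 3 → Fin 3 → ℂ) :
    ∑ a, ∑ b, RpM q w (i, j) (a, b) * F a b =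
      rDiag q w i j * F i j + rSwap q w i j * F j i := by
  simp only [RpM_apply, add_mul, Finset.sum_add_distrib, ite_and, ite_mul, zero_mul]
  congr 1
  · simp
  · rw [Finset.sum_comm]; simp

theorem RpM_yangBaxter (q s t : ℂ) (hq : q ≠ 0) (hs : s ≠ 0) (ht : t ≠ 0)
    (F : Fin 3 → Fin 3 → Fin 3 → ℂ) (i j k : Fin 3) :
    ∑ a, ∑ b, RpM q s (i, j) (a, b) * ∑ l, ∑ c, RpM q (s * t) (a, k) (l, c) *
        ∑ m, ∑ n, RpM q t (b, c) (m, n) * F l m n =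
      ∑ b, ∑ c, RpM q t (j, k) (b, c) * ∑ a, ∑ n, RpM q (s * t) (i, c) (a, n) *
        ∑ l, ∑ m, RpM q s (a, b) (l, m) * F l m n := by
  simp only [sum_RpM_mul]
  fin_cases i <;> fin_cases j <;> fin_cases k <;>
    simp [rDiag, rSwap] <;> field_simp <;> ring

theorem RpM_unitarity (q w : ℂ) (hq : q ≠ 0) (hw : w ≠ 0) (F : Fin 3 → Fin 3 → ℂ) (i j : Fin 3) :
    ∑ a, ∑ b, RpM q w (i, j) (a, b) * ∑ l, ∑ k, RpM q w⁻¹ (b, a) (l, k) * F k l =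
     ((w ^ 3 * q - (w ^ 3 * q)⁻¹) * (q / w ^ 3  - w ^ 3 / q)) * F i j := by
  simp only [sum_RpM_mul q w⁻¹ _ _ fun l k => F k l]
  simp only [sum_RpM_mul]
  fin_cases i <;> fin_cases j <;> simp [rDiag, rSwap] <;> field_simp <;> ring

theorem RpM_inv_mul_self (q p : ℂ) (hq : q ≠ 0) (hp : p ^ 3 = q) :
    RpM q p⁻¹ * RpM q p⁻¹ = (2 * (q⁻¹ - q)) • RpM q p⁻¹ := by
  have hp0 : p ≠ 0 := by rintro rfl; simp_all
  subst hp
  ext ⟨i, j⟩ ⟨k, l⟩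
  rw [Matrix.mul_apply, Fintype.sum_prod_type, sum_RpM_mul]
  simp only [RpM_apply, Matrix.smul_apply, smul_eq_mul]
  fin_cases i <;> fin_cases j <;> simp [rDiag, rSwap, hp0] <;>
   fin_cases k <;> fin_cases l <;> simp <;> field_simp <;> ring

section Embedding

variable {ι κ ν : Type*} {S : Type*} [Semiring S]

/-- The operator on `(ℂ³)^{⊗ι}` that acts as `X` on the tensor factors in the range of `e`, and as
the identity elsewhere. -/
noncomputable def embedAlong (e : κ → ι) (X : Matrix (κ → Fin 3) (κ → Fin 3) S) :
    Matrix (ι → Fin 3) (ι → Fin 3) S :=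
  open Classical in
  Matrix.of fun x y => if ∀ c ∉ Set.range e, x c = y c then X (x ∘ e) (y ∘ e) else 0

/-- The operator acting as `X` on the tensor factor `i`. -/
noncomputable def onSite (i : ι) (X : Matrix (Fin 3) (Fin 3) S) :
    Matrix (ι → Fin 3) (ι → Fin 3) S :=
  embedAlong (fun _ : Fin 1 => i) (Matrix.of fun x y => X (x 0) (y 0))

/-- The operator acting as `X` on the tensor factors `i` and `j`. -/
noncomputable def onPair (i j : ι) (X : Matrix (Fin 3 × Fin 3) (Fin 3 × Fin 3) S) :
    Matrix (ι → Fin 3) (ι → Fin 3) S :=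
  embedAlong ![i, j] (Matrix.of fun x y => X (x 0, x 1) (y 0, y 1))

theorem onSite_apply [DecidableEq ι] (i : ι) (X : Matrix (Fin 3) (Fin 3) S) (x y : ι → Fin 3)
    [Decidable (∀ c, c ≠ i → x c = y c)] :
    onSite i X x y = if ∀ c, c ≠ i → x c = y c then X (x i) (y i) else 0 := by
  simp only [onSite, embedAlong, Matrix.of_apply, Set.range_const, Set.mem_singleton_iff]
  congr

theorem embedAlong_comp {e : κ → ι} (he : Function.Injective e) (f : ν → κ)
    (X : Matrix (ν → Fin 3) (ν → Fin 3) S) :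
    embedAlong e (embedAlong f X) = embedAlong (e ∘ f) X := by
  classical
  ext x y
  simp only [embedAlong, Matrix.of_apply, ← ite_and, Function.comp_assoc]
  refine if_congr ⟨fun ⟨h₁, h₂⟩ c hc => ?_, fun h => ⟨fun c hc => h c ?_, fun k hk => h _ ?_⟩⟩
    rfl rfl
  · by_cases hce : c ∈ Set.range e
    · obtain ⟨k, rfl⟩ := hce
      exact h₂ k fun ⟨n, hn⟩ => hc ⟨n, by simp [hn]⟩
    · exact h₁ c hce
  · rintro ⟨n, rfl⟩
    exact hc ⟨f n, rfl⟩
  · rintro ⟨n, hn⟩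
    exact hk ⟨n, he hn⟩

theorem embedAlong_onSite {e : κ → ι} (he : Function.Injective e) (i : κ)
    (X : Matrix (Fin 3) (Fin 3) S) : embedAlong e (onSite i X) = onSite (e i) X :=
  embedAlong_comp he _ _

theorem embedAlong_onPair {e : κ → ι} (he : Function.Injective e) (i j : κ)
    (X : Matrix (Fin 3 × Fin 3) (Fin 3 × Fin 3) S) :
    embedAlong e (onPair i j X) = onPair (e i) (e j) X := by
  rw [onPair, embedAlong_comp he, onPair]
  congr 1
  ext k
  fin_cases k <;> rfl

theorem embedAlong_map {S' : Type*} [Semiring S'] (φ : S →+* S') (e : κ → ι)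
    (X : Matrix (κ → Fin 3) (κ → Fin 3) S) :
    embedAlong e (X.map φ) = (embedAlong e X).map φ := by
  ext x y
  simp [embedAlong, apply_ite φ]

theorem onPair_map {S' : Type*} [Semiring S'] (φ : S →+* S') (i j : ι)
    (X : Matrix (Fin 3 × Fin 3) (Fin 3 × Fin 3) S) :
    onPair i j (X.map φ) = (onPair i j X).map φ :=
  embedAlong_map φ _ _

theorem embedAlong_one (e : κ → ι) [DecidableEq ι] [DecidableEq κ] [Fintype ι] [Fintype κ] :
    embedAlong e (1 : Matrix (κ → Fin 3) (κ → Fin 3) S) = 1 := by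
  ext x y
  simp only [embedAlong, Matrix.of_apply, Matrix.one_apply, ← ite_and]
  have h : (∀ c ∉ Set.range e, x c = y c) ∧ x ∘ e = y ∘ e ↔ x = y := by
    refine ⟨fun ⟨h₁, h₂⟩ => funext fun c => ?_, by rintro rfl; simp⟩
    by_cases hce : c ∈ Set.range e
    · obtain ⟨k, rfl⟩ := hce
      exact congrFun h₂ k
    · exact h₁ c hce
  simp only [h]

variable [Fintype ι] [Fintype κ] [Fintype ν] [DecidableEq ι] [DecidableEq κ] [DecidableEq ν]

theorem embedAlong_mul_apply {e : κ → ι} (he : Function.Injective e)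
    (X : Matrix (κ → Fin 3) (κ → Fin 3) S) (Z : Matrix (ι → Fin 3) (ι → Fin 3) S)
    (x y : ι → Fin 3) :
    (embedAlong e X * Z) x y = ∑ t, X (x ∘ e) t * Z (Function.extend e t x) y := by
  classical
  rw [Matrix.mul_apply]
  symm
  refine Finset.sum_of_injOn (fun t => Function.extend e t x) ?_ (by simp) ?_ ?_
  · intro t _ t' _ h
    simpa [Function.extend_comp he] using congrArg (· ∘ e) h
  · intro z _ hz
    rw [embedAlong, Matrix.of_apply, if_neg, zero_mul]
    intro h
    refine hz ⟨z ∘ e, by simp, funext fun c => ?_⟩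
    by_cases hc : c ∈ Set.range e
    · obtain ⟨k, rfl⟩ := hc
      simp [he.extend_apply]
    · exact (Function.extend_apply' _ _ _ hc).trans (h c hc)
  · intro t _
    rw [embedAlong, Matrix.of_apply, if_pos, Function.extend_comp he]
    intro c hc
    rw [Function.extend_apply' _ _ _ hc]

theorem embedAlong_mul {e : κ → ι} (he : Function.Injective e)
    (X Y : Matrix (κ → Fin 3) (κ → Fin 3) S) :
    embedAlong e (X * Y) = embedAlong e X * embedAlong e Y := by
  classical
  ext x y
  rw [embedAlong_mul_apply he]
  simp only [embedAlong, Matrix.of_apply, Function.extend_comp he, Matrix.mul_apply]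
  have h : ∀ t : κ → Fin 3, (∀ c ∉ Set.range e, Function.extend e t x c = y c) ↔
      ∀ c ∉ Set.range e, x c = y c := fun t =>
    forall₂_congr fun c hc => by rw [Function.extend_apply' _ _ _ hc]
  simp only [h]
  split_ifs <;> simp

theorem embedAlong_mul_embedAlong_apply {e : κ → ι} {f : ν → ι}
    (hef : Disjoint (Set.range e) (Set.range f)) (X : Matrix (κ → Fin 3) (κ → Fin 3) S)
    (Y : Matrix (ν → Fin 3) (ν → Fin 3) S) (x y : ι → Fin 3)
    [Decidable (∀ c, c ∉ Set.range e → c ∉ Set.range f → x c = y c)] :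
    (embedAlong e X * embedAlong f Y) x y =
      if ∀ c, c ∉ Set.range e → c ∉ Set.range f → x c = y c then
        X (x ∘ e) (y ∘ e) * Y (x ∘ f) (y ∘ f) else 0 := by
  classical
  have hf : ∀ n, f n ∉ Set.range e := fun n h => Set.disjoint_left.1 hef h ⟨n, rfl⟩
  have he : ∀ k, e k ∉ Set.range f := fun k h => Set.disjoint_left.1 hef ⟨k, rfl⟩ h
  let z : ι → Fin 3 := fun c => if c ∈ Set.range e then y c else x c
  have hze : z ∘ e = y ∘ e := funext fun k => by simp [z]
  have hzf : z ∘ f = x ∘ f := funext fun n => by simp only [z, Function.comp, if_neg (hf n)]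
  rw [Matrix.mul_apply, Finset.sum_eq_single z]
  · simp only [embedAlong, Matrix.of_apply, hze, hzf]
    rw [if_pos fun c hc => by simp only [z, if_neg hc], mul_ite, mul_zero]
    refine if_congr ⟨fun h c hc hc' => ?_, fun h c hc => ?_⟩ rfl rfl
    · simpa only [z, if_neg hc] using h c hc'
    · by_cases hce : c ∈ Set.range e
      · simp only [z, if_pos hce]
      · simpa only [z, if_neg hce] using h c hce hc
  · intro w _ hw
    simp only [embedAlong, Matrix.of_apply]
    split_ifs with h₁ h₂
    · refine absurd (funext fun c => ?_) hw
      by_cases hce : c ∈ Set.range e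
      · obtain ⟨k, rfl⟩ := hce
        simpa [z] using h₂ _ (he k)
      · simp only [z, if_neg hce, h₁ c hce]
    all_goals simp
  · simp

theorem embedAlong_commute {e : κ → ι} {f : ν → ι}
    (hef : Disjoint (Set.range e) (Set.range f)) {X : Matrix (κ → Fin 3) (κ → Fin 3) S}
    {Y : Matrix (ν → Fin 3) (ν → Fin 3) S} (h : ∀ a b c d, Commute (X a b) (Y c d)) :
    Commute (embedAlong e X) (embedAlong f Y) := by
  classical
  ext x y
  rw [embedAlong_mul_embedAlong_apply hef, embedAlong_mul_embedAlong_apply hef.symm]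
  exact if_congr (forall_congr' fun c => ⟨fun h h₁ h₂ => h h₂ h₁, fun h h₁ h₂ => h h₂ h₁⟩)
    (h _ _ _ _) rfl

theorem vec_pair_injective {i j : ι} (h : i ≠ j) : Function.Injective ![i, j] := by
  intro a b hab
  fin_cases a <;> fin_cases b <;> simp_all [h.symm]

theorem onPair_mul {i j : ι} (h : i ≠ j) (X Y : Matrix (Fin 3 × Fin 3) (Fin 3 × Fin 3) S) :
    onPair i j (X * Y) = onPair i j X * onPair i j Y := by
  rw [onPair, onPair, onPair, ← embedAlong_mul (vec_pair_injective h)]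
  refine congrArg _ ?_
  ext x y
  simp only [Matrix.of_apply, Matrix.mul_apply]
  exact ((finTwoArrowEquiv (Fin 3)).sum_comp fun t => X (x 0, x 1) t * Y t (y 0, y 1)).symm

theorem onSite_mul_onSite {i j : ι} (h : i ≠ j) (X Y : Matrix (Fin 3) (Fin 3) S) :
    onSite i X * onSite j Y =
      onPair i j (Matrix.of fun a b => X a.1 b.1 * Y a.2 b.2) := by
  classical
  ext x y
  rw [onSite, onSite, embedAlong_mul_embedAlong_apply (by simpa using h)]
  simp only [onPair, embedAlong, Matrix.of_apply]
  have hc : (∀ c, c ∉ Set.range (fun _ : Fin 1 => i) → c ∉ Set.range (fun _ : Fin 1 => j) →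
      x c = y c) ↔ ∀ c ∉ Set.range ![i, j], x c = y c :=
    forall_congr' fun c => by simp; tauto
  simp only [hc]
  split_ifs <;> rfl

theorem onSite_mul_onSite' {i j : ι} (h : i ≠ j) (X Y : Matrix (Fin 3) (Fin 3) S) :
    onSite j Y * onSite i X =
      onPair i j (Matrix.of fun a b => Y a.2 b.2 * X a.1 b.1) := by
  classical
  ext x y
  rw [onSite, onSite, embedAlong_mul_embedAlong_apply (by simpa using h.symm)]
  simp only [onPair, embedAlong, Matrix.of_apply]
  have hc : (∀ c, c ∉ Set.range (fun _ : Fin 1 => j) → c ∉ Set.range (fun _ : Fin 1 => i) →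
      x c = y c) ↔ ∀ c ∉ Set.range ![i, j], x c = y c :=
    forall_congr' fun c => by simp
  simp only [hc]
  split_ifs <;> rfl

theorem onPair_mul_apply {i j : ι} (h : i ≠ j) (X : Matrix (Fin 3 × Fin 3) (Fin 3 × Fin 3) S)
    (Z : Matrix (ι → Fin 3) (ι → Fin 3) S) (x y : ι → Fin 3) :
    (onPair i j X * Z) x y = ∑ a, ∑ b, X (x i, x j) (a, b) *
      Z (Function.update (Function.update x i a) j b) y := by
  have he := vec_pair_injective h
  rw [onPair, embedAlong_mul_apply he, ← (finTwoArrowEquiv (Fin 3)).symm.sum_comp,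
    Fintype.sum_prod_type]
  refine Finset.sum_congr rfl fun a _ => Finset.sum_congr rfl fun b _ => ?_
  have hx : Function.extend ![i, j] ![a, b] x =
      Function.update (Function.update x i a) j b := by
    ext1 c
    by_cases hj : c = j
    · subst hj
      simpa using he.extend_apply ![a, b] x 1
    by_cases hi : c = i
    · subst hi
      simpa [hj] using he.extend_apply ![a, b] x 0
    · rw [Function.extend_apply' _ _ _ (by simp [Ne.symm hi, Ne.symm hj])]
      simp [hi, hj]
  simp [hx, finTwoArrowEquiv]

theorem trace_embedAlong_inl_mul_inr (X : Matrix (κ → Fin 3) (κ → Fin 3) S)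
    (Y : Matrix (ν → Fin 3) (ν → Fin 3) S) :
    Matrix.trace (embedAlong (Sum.inl : κ → κ ⊕ ν) X * embedAlong Sum.inr Y) =
      X.trace * Y.trace := by
  classical
  simp only [Matrix.trace, Matrix.diag_apply, Finset.sum_mul_sum]
  rw [← (Equiv.sumArrowEquivProdArrow κ ν (Fin 3)).symm.sum_comp, Fintype.sum_prod_type]
  refine Finset.sum_congr rfl fun a _ => Finset.sum_congr rfl fun b _ => ?_
  rw [embedAlong_mul_embedAlong_apply (Set.isCompl_range_inl_range_inr.disjoint)]
  simp
  rfl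

theorem trace_embedAlong_inr_mul_inl (X : Matrix (κ → Fin 3) (κ → Fin 3) S)
    (Y : Matrix (ν → Fin 3) (ν → Fin 3) S) :
    Matrix.trace (embedAlong Sum.inr Y * embedAlong (Sum.inl : κ → κ ⊕ ν) X) =
      Y.trace * X.trace := by
  classical
  simp only [Matrix.trace, Matrix.diag_apply, Finset.sum_mul_sum]
  rw [← (Equiv.sumArrowEquivProdArrow κ ν (Fin 3)).symm.sum_comp, Fintype.sum_prod_type,
    Finset.sum_comm]
  refine Finset.sum_congr rfl fun a _ => Finset.sum_congr rfl fun b _ => ?_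
  rw [embedAlong_mul_embedAlong_apply (Set.isCompl_range_inl_range_inr.disjoint.symm)]
  simp
  rfl

theorem onSite_mul (i : ι) (X Y : Matrix (Fin 3) (Fin 3) S) :
    onSite i (X * Y) = onSite i X * onSite i Y := by
  rw [onSite, onSite, onSite,
    ← embedAlong_mul (Function.injective_of_subsingleton fun _ : Fin 1 => i)]
  refine congrArg _ ?_
  ext x y
  simp only [Matrix.of_apply, Matrix.mul_apply]
  exact ((Equiv.funUnique (Fin 1) (Fin 3)).sum_comp fun t => X (x 0) t * Y t (y 0)).symm

theorem onSite_commute_onSite {i j : ι} (h : i ≠ j) {X Y : Matrix (Fin 3) (Fin 3) S}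
    (hXY : ∀ a b c d, Commute (X a b) (Y c d)) : Commute (onSite i X) (onSite j Y) :=
  embedAlong_commute (by simpa using h) fun _ _ _ _ => hXY _ _ _ _

theorem onPair_commute_onSite {i j k : ι} (hi : i ≠ k) (hj : j ≠ k)
    {X : Matrix (Fin 3 × Fin 3) (Fin 3 × Fin 3) S} {Y : Matrix (Fin 3) (Fin 3) S}
    (hXY : ∀ a b c d, Commute (X a b) (Y c d)) : Commute (onPair i j X) (onSite k Y) :=
  embedAlong_commute (by simp [hi.symm, hj.symm]) fun _ _ _ _ => hXY _ _ _ _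

theorem onPair_commute_onPair {i j k l : ι} (hik : i ≠ k) (hjk : j ≠ k) (hil : i ≠ l)
    (hjl : j ≠ l) {X Y : Matrix (Fin 3 × Fin 3) (Fin 3 × Fin 3) S}
    (hXY : ∀ a b c d, Commute (X a b) (Y c d)) : Commute (onPair i j X) (onPair k l Y) :=
  embedAlong_commute (by simp [hik.symm, hjk.symm, hil.symm, hjl.symm])
    fun _ _ _ _ => hXY _ _ _ _

end Embedding

section Scalar

variable {n : Type*} [Fintype n] [DecidableEq n] {S : Type*} [Ring S] [Algebra ℂ S]

/-- Complex matrices, viewed as matrices over a complex algebra. -/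
noncomputable abbrev scalarMatrix (n S : Type*) [Fintype n] [DecidableEq n] [Ring S]
    [Algebra ℂ S] : Matrix n n ℂ →+* Matrix n n S :=
  (algebraMap ℂ S).mapMatrix

theorem trace_scalarMatrix_mul_comm (w : Matrix n n ℂ) (X : Matrix n n S) :
    (scalarMatrix n S w * X).trace = (X * scalarMatrix n S w).trace := by
  simp only [Matrix.trace, Matrix.diag_apply, Matrix.mul_apply, RingHom.mapMatrix_apply,
    Matrix.map_apply]
  rw [Finset.sum_comm]
  exact Finset.sum_congr rfl fun _ _ => Finset.sum_congr rfl fun _ _ => Algebra.commutes _ _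

theorem trace_projector_exchange {w v p : Matrix n n ℂ} (hwv : w * v = 1) (hvw : v * w = 1)
    (hw : p * w * p = w * p) (hv : p * v * p = v * p)
    {X Y : Matrix n n S}
    (hY : scalarMatrix n S p * Y * scalarMatrix n S p = Y * scalarMatrix n S p)
    (h : scalarMatrix n S w * X = Y * scalarMatrix n S w) :
    (scalarMatrix n S p * X).trace = (scalarMatrix n S p * Y).trace := by
  let c := scalarMatrix n S
  have hX : X = c v * Y * c w := by
    rw [mul_assoc, ← h, ← mul_assoc, ← map_mul, hvw, map_one, one_mul]
  have e₁ : c w * c p = c p * c w * c p := by simp only [← map_mul, hw]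
  have e₂ : c p * c w * c p * (c v * c p) = c p := by
    rw [← e₁]
    simp only [← map_mul]
    rw [mul_assoc, ← mul_assoc p, hv, ← mul_assoc, hwv, one_mul]
  calc (c p * X).trace = (X * c p).trace := trace_scalarMatrix_mul_comm _ _
    _ = (c v * (Y * c p) * (c w * c p)).trace := by
        rw [mul_assoc (c v) (Y * c p), mul_assoc Y, ← mul_assoc (c p), ← e₁, hX]
        simp only [mul_assoc]
    _ = (c (v * p) * (Y * (c p * c w * c p))).trace := by
        rw [← hY, map_mul]
        simp only [mul_assoc]
        rfl
    _ = (Y * (c p * c w * c p * (c v * c p))).trace := by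
        rw [trace_scalarMatrix_mul_comm, map_mul]
        simp only [mul_assoc]
        rfl
    _ = (c p * Y).trace := by
        rw [e₂]
        exact (trace_scalarMatrix_mul_comm _ _).symm

theorem scalarMatrix_onPair {ι : Type*} [Fintype ι] [DecidableEq ι] (i j : ι)
    (X : Matrix (Fin 3 × Fin 3) (Fin 3 × Fin 3) ℂ) :
    scalarMatrix (ι → Fin 3) S (onPair i j X) = onPair i j (scalarMatrix _ S X) :=
  (onPair_map (algebraMap ℂ S) i j X).symm

theorem mul_projector_of_intertwines {w w' p : Matrix n n ℂ} (hw : IsUnit w) (hw' : IsUnit w')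
    (hp : p * p = p) (h : w * p = p * w') :
    p * w * p = w * p ∧ p * w⁻¹ * p = w⁻¹ * p := by
  have h' : w⁻¹ * p = p * w'⁻¹ := by
    rw [Matrix.isUnit_iff_isUnit_det] at hw hw'
    calc w⁻¹ * p = w⁻¹ * (p * w') * w'⁻¹ := by
          rw [mul_assoc, mul_assoc, Matrix.mul_nonsing_inv _ hw', mul_one]
      _ = p * w'⁻¹ := by rw [← h, ← mul_assoc, Matrix.nonsing_inv_mul _ hw, one_mul]
  exact ⟨by rw [mul_assoc, h, ← mul_assoc, hp], by rw [mul_assoc, h', ← mul_assoc, hp]⟩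

theorem mul_projector_mul {T : Type*} [Ring T] {p q X : T} (hpq : Commute p q)
    (hp : p * X * p = X * p) (hq : q * X * q = X * q) : p * q * X * (p * q) = X * (p * q) :=
  calc p * q * X * (p * q) = p * (q * X * q) * p := by
        nth_rw 2 [hpq.eq]; simp only [mul_assoc]
    _ = (p * X * p) * q := by rw [hq]; simp only [mul_assoc]; rw [hpq.eq]
    _ = X * (p * q) := by rw [hp, mul_assoc]

theorem commute_trace_of_exchange {κ ν : Type*} [Fintype κ] [Fintype ν] [DecidableEq κ]
    [DecidableEq ν] {A : Matrix (κ → Fin 3) (κ → Fin 3) S} {B : Matrix (ν → Fin 3) (ν → Fin 3) S}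
    {P : Matrix (κ → Fin 3) (κ → Fin 3) ℂ} {Q : Matrix (ν → Fin 3) (ν → Fin 3) ℂ}
    (hP : P * P = P) (hQ : Q * Q = Q)
    (hA : scalarMatrix _ S P * A * scalarMatrix _ S P = A * scalarMatrix _ S P)
    (hB : scalarMatrix _ S Q * B * scalarMatrix _ S Q = B * scalarMatrix _ S Q)
    {w w₁ w₂ : Matrix (κ ⊕ ν → Fin 3) (κ ⊕ ν → Fin 3) ℂ}
    (hw : IsUnit w) (hw₁ : IsUnit w₁) (hw₂ : IsUnit w₂)
    (h₁ : w * embedAlong Sum.inl P = embedAlong Sum.inl P * w₁)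
    (h₂ : w * embedAlong Sum.inr Q = embedAlong Sum.inr Q * w₂)
    (h : scalarMatrix _ S w * embedAlong Sum.inl A * embedAlong Sum.inr B =
      embedAlong Sum.inr B * embedAlong Sum.inl A * scalarMatrix _ S w) :
    Commute (scalarMatrix _ S P * A).trace (scalarMatrix _ S Q * B).trace := by
  have hl : Function.Injective (Sum.inl : κ → κ ⊕ ν) := Sum.inl_injective
  have hr : Function.Injective (Sum.inr : ν → κ ⊕ ν) := Sum.inr_injective
  have hd : Disjoint (Set.range (Sum.inl : κ → κ ⊕ ν)) (Set.range Sum.inr) :=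
    Set.isCompl_range_inl_range_inr.disjoint
  have hPe : scalarMatrix _ S (embedAlong (Sum.inl : κ → κ ⊕ ν) P) =
      embedAlong Sum.inl (scalarMatrix _ S P) := (embedAlong_map _ _ _).symm
  have hQe : scalarMatrix _ S (embedAlong (Sum.inr : ν → κ ⊕ ν) Q) =
      embedAlong Sum.inr (scalarMatrix _ S Q) := (embedAlong_map _ _ _).symm
  have hpp : embedAlong (Sum.inl : κ → κ ⊕ ν) P * embedAlong Sum.inl P = embedAlong Sum.inl P := by
    rw [← embedAlong_mul hl, hP]
  have hqq : embedAlong (Sum.inr : ν → κ ⊕ ν) Q * embedAlong Sum.inr Q = embedAlong Sum.inr Q := by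
    rw [← embedAlong_mul hr, hQ]
  have hpq : Commute (embedAlong (Sum.inl : κ → κ ⊕ ν) P) (embedAlong Sum.inr Q) :=
    embedAlong_commute hd fun _ _ _ _ => Commute.all _ _
  have hpB : Commute (embedAlong (Sum.inl : κ → κ ⊕ ν) (scalarMatrix _ S P))
      (embedAlong Sum.inr B) := embedAlong_commute hd fun _ _ _ _ => Algebra.commutes _ _
  have hAq : Commute (embedAlong (Sum.inl : κ → κ ⊕ ν) A)
      (embedAlong Sum.inr (scalarMatrix _ S Q)) :=
    embedAlong_commute hd fun _ _ _ _ => (Algebra.commutes _ _).symm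
  have hPQ : Commute (embedAlong (Sum.inl : κ → κ ⊕ ν) (scalarMatrix _ S P))
      (embedAlong Sum.inr (scalarMatrix _ S Q)) := by
    rw [← hPe, ← hQe]; exact hpq.map _
  obtain ⟨hw1, hv1⟩ := mul_projector_of_intertwines hw hw₁ hpp h₁
  obtain ⟨hw2, hv2⟩ := mul_projector_of_intertwines hw hw₂ hqq h₂
  have hdet := (Matrix.isUnit_iff_isUnit_det w).1 hw
  have hA' := congrArg (embedAlong (Sum.inl : κ → κ ⊕ ν)) hA
  have hB' := congrArg (embedAlong (Sum.inr : ν → κ ⊕ ν)) hB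
  simp only [embedAlong_mul hl] at hA'
  simp only [embedAlong_mul hr] at hB'
  have := trace_projector_exchange (S := S) (Matrix.mul_nonsing_inv _ hdet)
    (Matrix.nonsing_inv_mul _ hdet) (mul_projector_mul hpq hw1 hw2) (mul_projector_mul hpq hv1 hv2)
    (X := embedAlong Sum.inl A * embedAlong Sum.inr B)
    (Y := embedAlong Sum.inr B * embedAlong Sum.inl A) ?_ (by rw [← mul_assoc, h])
  · rw [Commute, SemiconjBy, ← trace_embedAlong_inl_mul_inr, ← trace_embedAlong_inr_mul_inl,
      embedAlong_mul hl, embedAlong_mul hr]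
    rw [map_mul, hPe, hQe] at this
    convert this using 2
    · rw [mul_assoc, ← mul_assoc _ _ (embedAlong Sum.inr B), hAq.eq]
      simp only [mul_assoc]
    · rw [hPQ.eq, mul_assoc, ← mul_assoc _ _ (embedAlong Sum.inl A), ← hpB.eq]
      simp only [mul_assoc]
  · rw [map_mul, hPe, hQe]
    refine mul_projector_mul hPQ ?_ ?_
    · rw [← mul_assoc, hpB.eq, mul_assoc, mul_assoc, ← mul_assoc _ _ (embedAlong _ _), hA',
        mul_assoc]
    · rw [mul_assoc, mul_assoc, hAq.eq, ← mul_assoc _ _ (embedAlong Sum.inl A), ← mul_assoc,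
        ← mul_assoc, hB', mul_assoc]

end Scalar

section ExchangeRelation

variable {S : Type*} [Ring S]

/-- The product `X₁ Y₂` of matrices with noncommuting entries. -/
def kronMul (X Y : Matrix (Fin 3) (Fin 3) S) : Matrix (Fin 3 × Fin 3) (Fin 3 × Fin 3) S :=
  Matrix.of fun a b => X a.1 b.1 * Y a.2 b.2

/-- The product `Y₂ X₁` of matrices with noncommuting entries. -/
def kronMulRev (X Y : Matrix (Fin 3) (Fin 3) S) : Matrix (Fin 3 × Fin 3) (Fin 3 × Fin 3) S :=
  Matrix.of fun a b => Y a.2 b.2 * X a.1 b.1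

theorem kronMul_mul {X X' Y Y' : Matrix (Fin 3) (Fin 3) S}
    (h : ∀ a b c d, Commute (X' a b) (Y c d)) :
    kronMul (X * X') (Y * Y') = kronMul X Y * kronMul X' Y' := by
  ext a b
  simp only [kronMul, Matrix.of_apply, Matrix.mul_apply, Finset.sum_mul_sum,
    Fintype.sum_prod_type]
  refine Finset.sum_congr rfl fun i _ => Finset.sum_congr rfl fun j _ => ?_
  rw [(h _ _ _ _).mul_mul_mul_comm]

theorem kronMulRev_mul {X X' Y Y' : Matrix (Fin 3) (Fin 3) S}
    (h : ∀ a b c d, Commute (X a b) (Y' c d)) :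
    kronMulRev (X * X') (Y * Y') = kronMulRev X Y * kronMulRev X' Y' := by
  ext a b
  simp only [kronMulRev, Matrix.of_apply, Matrix.mul_apply, Finset.sum_mul_sum,
    Fintype.sum_prod_type]
  rw [Finset.sum_comm]
  refine Finset.sum_congr rfl fun i _ => Finset.sum_congr rfl fun j _ => ?_
  rw [(h _ _ _ _).symm.mul_mul_mul_comm]

variable [Algebra ℂ S]

/-- The exchange relation `R(w) X₁ Y₂ = Y₂ X₁ R(w)`. -/
def RLL (q w : ℂ) (X Y : Matrix (Fin 3) (Fin 3) S) : Prop :=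
  scalarMatrix _ S (RpM q w) * kronMul X Y = kronMulRev X Y * scalarMatrix _ S (RpM q w)

theorem RLL.mul {q w : ℂ} {X X' Y Y' : Matrix (Fin 3) (Fin 3) S} (h : RLL q w X Y)
    (h' : RLL q w X' Y') (hXY' : ∀ a b c d, Commute (X a b) (Y' c d))
    (hX'Y : ∀ a b c d, Commute (X' a b) (Y c d)) : RLL q w (X * X') (Y * Y') := by
  rw [RLL] at h h' ⊢
  rw [kronMul_mul hX'Y, kronMulRev_mul hXY', ← mul_assoc, h, mul_assoc, h', mul_assoc]

theorem RLL.map {S' : Type*} [Ring S'] [Algebra ℂ S'] (φ : S →ₐ[ℂ] S') {q w : ℂ}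
    {X Y : Matrix (Fin 3) (Fin 3) S} (h : RLL q w X Y) : RLL q w (X.map φ) (Y.map φ) := by
  have hs : scalarMatrix (Fin 3 × Fin 3) S' (RpM q w) =
      φ.toRingHom.mapMatrix (scalarMatrix _ S (RpM q w)) := by
    ext a b
    simp
  have h₁ : kronMul (X.map φ) (Y.map φ) = φ.toRingHom.mapMatrix (kronMul X Y) := by
    ext a b
    simp [kronMul]
  have h₂ : kronMulRev (X.map φ) (Y.map φ) = φ.toRingHom.mapMatrix (kronMulRev X Y) := by
    ext a b
    simp [kronMulRev]
  rw [RLL] at h ⊢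
  rw [hs, h₁, h₂, ← map_mul, ← map_mul, h]

theorem RLL.of_twist {q w : ℂ} {K : Matrix (Fin 3) (Fin 3) ℂ}
    (h : RpM q w * (K ⊗ₖ K) = (K ⊗ₖ K) * RpM q w) :
    RLL q w (scalarMatrix _ S K) (scalarMatrix _ S K) := by
  have h₁ : kronMul (scalarMatrix _ S K) (scalarMatrix _ S K) = scalarMatrix _ S (K ⊗ₖ K) := by
    ext a b
    simp [kronMul]
  have h₂ : kronMulRev (scalarMatrix _ S K) (scalarMatrix _ S K) = scalarMatrix _ S (K ⊗ₖ K) := by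
    ext a b
    simp [kronMulRev, mul_comm, ← map_mul]
  rw [RLL, h₁, h₂, ← map_mul, ← map_mul, h]

/-- The R-matrix as a matrix over the first factor with entries operators on the second one. -/
noncomputable def laxMatrix (q w : ℂ) : Matrix (Fin 3) (Fin 3) (Matrix (Fin 3) (Fin 3) ℂ) :=
  (Matrix.comp (Fin 3) (Fin 3) (Fin 3) (Fin 3) ℂ).symm (RpM q w)

theorem RLL_laxMatrix {q s t : ℂ} (hq : q ≠ 0) (hs : s ≠ 0) (ht : t ≠ 0) :
    RLL q s (laxMatrix q (s * t)) (laxMatrix q t) := by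
  rw [RLL]
  ext ⟨i, j⟩ ⟨l, m⟩ k n
  have h := RpM_yangBaxter q s t hq hs ht
    (fun l' m' n' => if l' = l then if m' = m then if n' = n then 1 else 0 else 0 else 0) i j k
  simp only [mul_ite, mul_one, mul_zero, Finset.sum_ite_eq', Finset.sum_ite_irrel,
    Finset.mem_univ, if_true, Finset.sum_const_zero] at h
  simp only [Matrix.mul_apply, Fintype.sum_prod_type, Matrix.sum_apply, RingHom.mapMatrix_apply,
    Matrix.map_apply, kronMul, kronMulRev, Matrix.of_apply, laxMatrix, Matrix.comp_symm_apply,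
    ← Algebra.commutes (R := ℂ) (A := Matrix (Fin 3) (Fin 3) ℂ), ← Algebra.smul_def,
    Matrix.smul_apply, smul_eq_mul]
  simp only [Finset.mul_sum] at h ⊢
  rw [h, Finset.sum_comm (f := fun x x_1 => ∑ i_1, RpM q s (x, x_1) (l, m) * _)]
  refine Finset.sum_congr rfl fun b _ => ?_
  rw [Finset.sum_comm]
  exact Finset.sum_congr rfl fun a _ => Finset.sum_congr rfl fun c _ => by ring

variable {ι : Type*} [Fintype ι] [DecidableEq ι]

theorem RLL.exchange_onSite {q w : ℂ} {X Y : Matrix (Fin 3) (Fin 3) S} (h : RLL q w X Y) {i j : ι}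
    (hij : i ≠ j) :
    scalarMatrix _ S (onPair i j (RpM q w)) * onSite i X * onSite j Y =
      onSite j Y * onSite i X * scalarMatrix _ S (onPair i j (RpM q w)) := by
  rw [scalarMatrix_onPair, mul_assoc, onSite_mul_onSite hij, onSite_mul_onSite' hij,
    ← onPair_mul hij, ← onPair_mul hij]
  exact congrArg _ h

theorem onPair_mulVec {i j : ι} (h : i ≠ j) (X : Matrix (Fin 3 × Fin 3) (Fin 3 × Fin 3) ℂ)
    (f : (ι → Fin 3) → ℂ) (x : ι → Fin 3) :
    (onPair i j X *ᵥ f) x = ∑ a, ∑ b, X (x i, x j) (a, b) *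
      f (Function.update (Function.update x i a) j b) :=
  onPair_mul_apply h X (Matrix.of fun y _ => f y) x x

theorem onPair_yangBaxter {q s t : ℂ} (hq : q ≠ 0) (hs : s ≠ 0) (ht : t ≠ 0) {i j k : ι}
    (hij : i ≠ j) (hik : i ≠ k) (hjk : j ≠ k) :
    onPair i j (RpM q s) * onPair i k (RpM q (s * t)) * onPair j k (RpM q t) =
      onPair j k (RpM q t) * onPair i k (RpM q (s * t)) * onPair i j (RpM q s) := by
  refine Matrix.mulVec_injective (funext fun f => funext fun x => ?_)
  have h := RpM_yangBaxter q s t hq hs ht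
    (fun l m n => f (Function.update (Function.update (Function.update x i l) j m) k n))
    (x i) (x j) (x k)
  have el : ∀ a b l c m n : Fin 3, Function.update (Function.update (Function.update
      (Function.update (Function.update (Function.update x i a) j b) i l) k c) j m) k n =
      Function.update (Function.update (Function.update x i l) j m) k n := by
    intros
    ext1 d
    simp only [Function.update_apply]
    split_ifs <;> rfl
  have er : ∀ b c a n l m : Fin 3, Function.update (Function.update (Function.update
      (Function.update (Function.update (Function.update x j b) k c) i a) k n) i l) j m =
      Function.update (Function.update (Function.update x i l) j m) k n := by
    intros
    ext1 d
    simp only [Function.update_apply]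
    split_ifs <;> simp_all
  simp only [← Matrix.mulVec_mulVec, onPair_mulVec hij, onPair_mulVec hik, onPair_mulVec hjk,
    el, er]
  simpa [hij, hik, hjk, hij.symm, hik.symm, hjk.symm] using h

theorem onPair_unitarity {q w : ℂ} (hq : q ≠ 0) (hw : w ≠ 0) {i j : ι} (hij : i ≠ j) :
    onPair i j (RpM q w) * onPair j i (RpM q w⁻¹) =
      ((w ^ 3 * q - (w ^ 3 * q)⁻¹) * (q / w ^ 3 - w ^ 3 / q)) •
        (1 : Matrix (ι → Fin 3) (ι → Fin 3) ℂ) := by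
  refine Matrix.mulVec_injective (funext fun f => funext fun x => ?_)
  have h := RpM_unitarity q w hq hw
    (fun l m => f (Function.update (Function.update x i l) j m)) (x i) (x j)
  have e : ∀ a b l m : Fin 3, Function.update (Function.update (Function.update
      (Function.update x i a) j b) j l) i m = Function.update (Function.update x i m) j l := by
    intros
    ext1 d
    simp only [Function.update_apply]
    split_ifs <;> simp_all
  simp only [← Matrix.mulVec_mulVec, onPair_mulVec hij, onPair_mulVec hij.symm, e]
  simpa [hij, Matrix.smul_mulVec] using h

end ExchangeRelation

section Exchange

variable {T : Type*} [Monoid T]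

theorem exchange_mul_right {r r' a b b' : T} (h : r * a * b = b * a * r)
    (h' : r' * a * b' = b' * a * r') (hr : Commute r b') (hr' : Commute r' b) :
    r * r' * a * (b' * b) = b' * b * a * (r * r') :=
  calc r * r' * a * (b' * b) = r * (r' * a * b') * b := by simp only [mul_assoc]
    _ = r * b' * a * (r' * b) := by rw [h']; simp only [mul_assoc]
    _ = b' * (r * a * b) * r' := by rw [hr.eq, hr'.eq]; simp only [mul_assoc]
    _ = b' * b * a * (r * r') := by rw [h]; simp only [mul_assoc]

theorem exchange_mul_left {r r' a a' b : T} (h : r * a * b = b * a * r)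
    (h' : r' * a' * b = b * a' * r') (hr : Commute r a') (hr' : Commute r' a) :
    r * r' * (a * a') * b = b * (a * a') * (r * r') :=
  calc r * r' * (a * a') * b = r * (r' * a) * a' * b := by simp only [mul_assoc]
    _ = r * a * (r' * a' * b) := by rw [hr'.eq]; simp only [mul_assoc]
    _ = (r * a * b) * a' * r' := by rw [h']; simp only [mul_assoc]
    _ = b * a * (r * a') * r' := by rw [h]; simp only [mul_assoc]
    _ = b * (a * a') * (r * r') := by rw [hr.eq]; simp only [mul_assoc]

end Exchange

section Commutation

/-- The values of the spectral parameter at which the R-matrix is invertible. -/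
def RegularSpectral (q w : ℂ) : Prop :=
  w ≠ 0 ∧ w ^ 6 ≠ (q ^ 2)⁻¹ ∧ w ^ 6 ≠ q ^ 2

theorem RegularSpectral.isUnit_onPair {ι : Type*} [Fintype ι] [DecidableEq ι] {q w : ℂ}
    (hq : q ≠ 0) (h : RegularSpectral q w) {i j : ι} (hij : i ≠ j) :
    IsUnit (onPair i j (RpM q w)) := by
  obtain ⟨hw, h₁, h₂⟩ := h
  have hc : (w ^ 3 * q - (w ^ 3 * q)⁻¹) * (q / w ^ 3 - w ^ 3 / q) ≠ 0 := by
    refine mul_ne_zero (fun h => h₁ ?_) fun h => h₂ ?_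
    · field_simp at h ⊢
      linear_combination h
    · field_simp at h
      linear_combination -h
  refine IsUnit.of_mul_eq_one (b := ((w ^ 3 * q - (w ^ 3 * q)⁻¹) *
    (q / w ^ 3 - w ^ 3 / q))⁻¹ • onPair j i (RpM q w⁻¹)) ?_
  rw [mul_smul_comm, onPair_unitarity hq hw hij, smul_smul, inv_mul_cancel₀ hc, one_smul]

theorem Pm_mul_self {q p : ℂ} (hq : q ≠ 0) (hq2 : q ^ 2 ≠ 1) (hp : p ^ 3 = q) :
    Pm q p * Pm q p = Pm q p := by
  have hc : 2 * (q⁻¹ - q) ≠ 0 := by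
    refine mul_ne_zero two_ne_zero fun h => hq2 ?_
    field_simp at h
    linear_combination -h
  rw [Pm, smul_mul_smul_comm, RpM_inv_mul_self q p hq hp, smul_smul, mul_assoc,
    inv_mul_cancel₀ hc, mul_one]

variable {ι : Type*} [Fintype ι] [DecidableEq ι]

theorem onPair_smul {S : Type*} [Semiring S] (i j : ι) (c : S)
    (X : Matrix (Fin 3 × Fin 3) (Fin 3 × Fin 3) S) : onPair i j (c • X) = c • onPair i j X := by
  ext x y
  simp [onPair, embedAlong]

theorem onPair_yangBaxter_Pm_right {q p s t : ℂ} (hq : q ≠ 0) (hp : p ^ 3 = q) (hs : s ≠ 0)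
    (ht : t = s / p) {i j k : ι} (hij : i ≠ j) (hik : i ≠ k) (hjk : j ≠ k) :
    onPair i j (RpM q s) * onPair i k (RpM q t) * onPair j k (Pm q p) =
      onPair j k (Pm q p) * (onPair i k (RpM q t) * onPair i j (RpM q s)) := by
  have hp0 : p ≠ 0 := by rintro rfl; simp_all
  rw [Pm, onPair_smul, mul_smul_comm, smul_mul_assoc, ht, div_eq_mul_inv,
    onPair_yangBaxter hq hs (inv_ne_zero hp0) hij hik hjk, mul_assoc]

theorem onPair_yangBaxter_Pm_left {q p s t : ℂ} (hq : q ≠ 0) (hp : p ^ 3 = q) (ht : t ≠ 0)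
    (hs : s = t / p) {i j k : ι} (hij : i ≠ j) (hik : i ≠ k) (hjk : j ≠ k) :
    onPair j k (RpM q t) * onPair i k (RpM q s) * onPair i j (Pm q p) =
      onPair i j (Pm q p) * (onPair i k (RpM q s) * onPair j k (RpM q t)) := by
  have hp0 : p ≠ 0 := by rintro rfl; simp_all
  rw [Pm, onPair_smul, mul_smul_comm, smul_mul_assoc, hs, div_eq_inv_mul,
    ← onPair_yangBaxter hq (inv_ne_zero hp0) ht hij hik hjk, mul_assoc]

variable {S : Type*} [Ring S] [Algebra ℂ S]

theorem scalarMatrix_onPair_commute_onSite {i j k : ι} (hi : i ≠ k) (hj : j ≠ k)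
    (X : Matrix (Fin 3 × Fin 3) (Fin 3 × Fin 3) ℂ) (Y : Matrix (Fin 3) (Fin 3) S) :
    Commute (scalarMatrix _ S (onPair i j X)) (onSite k Y) := by
  rw [scalarMatrix_onPair]
  exact onPair_commute_onSite hi hj fun _ _ _ _ => Algebra.commutes _ _

theorem RLL.projector_onSite {q p : ℂ} (hq : q ≠ 0) (hq2 : q ^ 2 ≠ 1) (hp : p ^ 3 = q)
    {X Y : Matrix (Fin 3) (Fin 3) S} (h : RLL q p⁻¹ X Y) {i j : ι} (hij : i ≠ j) :
    scalarMatrix _ S (onPair i j (Pm q p)) * (onSite j Y * onSite i X) *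
        scalarMatrix _ S (onPair i j (Pm q p)) =
      onSite j Y * onSite i X * scalarMatrix _ S (onPair i j (Pm q p)) := by
  have e : scalarMatrix (ι → Fin 3) S (onPair i j (Pm q p)) =
      (2 * (q⁻¹ - q))⁻¹ • scalarMatrix _ S (onPair i j (RpM q p⁻¹)) := by
    ext x y
    rw [Pm, onPair_smul]
    simp only [RingHom.mapMatrix_apply, Matrix.map_apply, Matrix.smul_apply, smul_eq_mul]
    rw [map_mul, Algebra.smul_def]
  have hPP : scalarMatrix (ι → Fin 3) S (onPair i j (Pm q p)) *
      scalarMatrix _ S (onPair i j (Pm q p)) = scalarMatrix _ S (onPair i j (Pm q p)) := by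
    rw [← map_mul, ← onPair_mul hij, Pm_mul_self hq hq2 hp]
  have hx : onSite j Y * onSite i X * scalarMatrix _ S (onPair i j (Pm q p)) =
      scalarMatrix _ S (onPair i j (Pm q p)) * (onSite i X * onSite j Y) := by
    rw [e, mul_smul_comm, smul_mul_assoc, ← mul_assoc, h.exchange_onSite hij]
  rw [mul_assoc, hx, ← mul_assoc, hPP]

/-- The trace of a matrix over the auxiliary space. -/
noncomputable def auxTrace (X : Matrix (Fin 3) (Fin 3) S) : S :=
  (scalarMatrix (Fin 1 → Fin 3) S 1 * onSite 0 X).trace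

/-- The trace of a product of two matrices over the auxiliary spaces, projected with `Pm`. -/
noncomputable def fusedTrace (q p : ℂ) (X Y : Matrix (Fin 3) (Fin 3) S) : S :=
  (scalarMatrix (Fin 2 → Fin 3) S (onPair 0 1 (Pm q p)) * (onSite 1 Y * onSite 0 X)).trace

variable {q p u v : ℂ} {M : ℂ → Matrix (Fin 3) (Fin 3) S}

theorem commute_auxTrace_auxTrace (hq : q ≠ 0)
    (hM : ∀ u v, u ≠ 0 → v ≠ 0 → RLL q (u / v) (M u) (M v)) (hu : u ≠ 0) (hv : v ≠ 0)
    (hr : RegularSpectral q (u / v)) : Commute (auxTrace (M u)) (auxTrace (M v)) := by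
  have hw := hr.isUnit_onPair hq (i := (.inl 0 : Fin 1 ⊕ Fin 1)) (j := .inr 0) (by simp)
  refine commute_trace_of_exchange (by simp) (by simp) (by simp) (by simp) hw hw hw
    (by simp [embedAlong_one]) (by simp [embedAlong_one]) ?_
  rw [embedAlong_onSite Sum.inl_injective, embedAlong_onSite Sum.inr_injective]
  exact (hM u v hu hv).exchange_onSite (by simp)

theorem commute_auxTrace_fusedTrace (hq : q ≠ 0) (hq2 : q ^ 2 ≠ 1) (hp : p ^ 3 = q)
    (hM : ∀ u v, u ≠ 0 → v ≠ 0 → RLL q (u / v) (M u) (M v)) (hu : u ≠ 0) (hv : v ≠ 0)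
    (hr : RegularSpectral q (u / v)) (hr' : RegularSpectral q (u / (v / p))) :
    Commute (auxTrace (M u)) (fusedTrace q p (M (v / p)) (M v)) := by
  have hp0 : p ≠ 0 := by rintro rfl; simp_all
  have hvp : v / p ≠ 0 := div_ne_zero hv hp0
  have hf : RLL q p⁻¹ (M (v / p)) (M v) := by
    convert hM _ _ hvp hv using 1
    field_simp
  have had := hr.isUnit_onPair hq (i := (.inl 0 : Fin 1 ⊕ Fin 2)) (j := .inr 1) (by simp)
  have hac := hr'.isUnit_onPair hq (i := (.inl 0 : Fin 1 ⊕ Fin 2)) (j := .inr 0) (by simp)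
  refine commute_trace_of_exchange (by simp)
    (by rw [← onPair_mul (by simp), Pm_mul_self hq hq2 hp]) (by simp)
    (hf.projector_onSite hq hq2 hp (by simp)) (hac.mul had) (hac.mul had) (had.mul hac)
    (by simp [embedAlong_one]) ?_ ?_
  · rw [embedAlong_onPair Sum.inr_injective]
    exact onPair_yangBaxter_Pm_right hq hp (div_ne_zero hu hvp) (by field_simp) (by simp) (by simp)
      (by simp)
  · simp only [map_mul, embedAlong_mul (Sum.inr_injective (α := Fin 1) (β := Fin 2)),
      embedAlong_onSite Sum.inl_injective, embedAlong_onSite Sum.inr_injective]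
    exact exchange_mul_right ((hM _ _ hu hvp).exchange_onSite (by simp))
      ((hM _ _ hu hv).exchange_onSite (by simp))
      (scalarMatrix_onPair_commute_onSite (by simp) (by simp) _ _)
      (scalarMatrix_onPair_commute_onSite (by simp) (by simp) _ _)

theorem commute_fusedTrace_fusedTrace (hq : q ≠ 0) (hq2 : q ^ 2 ≠ 1) (hp : p ^ 3 = q)
    (hM : ∀ u v, u ≠ 0 → v ≠ 0 → RLL q (u / v) (M u) (M v)) (hu : u ≠ 0) (hv : v ≠ 0)
    (hr : RegularSpectral q (u / v)) (hr₁ : RegularSpectral q (u / (v / p)))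
    (hr₂ : RegularSpectral q (u / p / v)) (hr₃ : RegularSpectral q (u / p / (v / p))) :
    Commute (fusedTrace q p (M (u / p)) (M u)) (fusedTrace q p (M (v / p)) (M v)) := by
  have hp0 : p ≠ 0 := by rintro rfl; simp_all
  have hup : u / p ≠ 0 := div_ne_zero hu hp0
  have hvp : v / p ≠ 0 := div_ne_zero hv hp0
  have hf : ∀ v ≠ 0, RLL q p⁻¹ (M (v / p)) (M v) := by
    intro v hv
    convert hM _ _ (div_ne_zero hv hp0) hv using 1
    field_simp
  have hbd := hr.isUnit_onPair hq (i := (.inl 1 : Fin 2 ⊕ Fin 2)) (j := .inr 1) (by simp)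
  have hbc := hr₁.isUnit_onPair hq (i := (.inl 1 : Fin 2 ⊕ Fin 2)) (j := .inr 0) (by simp)
  have had := hr₂.isUnit_onPair hq (i := (.inl 0 : Fin 2 ⊕ Fin 2)) (j := .inr 1) (by simp)
  have hac := hr₃.isUnit_onPair hq (i := (.inl 0 : Fin 2 ⊕ Fin 2)) (j := .inr 0) (by simp)
  have hPP : onPair (0 : Fin 2) 1 (Pm q p) * onPair 0 1 (Pm q p) = onPair 0 1 (Pm q p) := by
    rw [← onPair_mul (by simp), Pm_mul_self hq hq2 hp]
  refine commute_trace_of_exchange hPP hPP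
    ((hf u hu).projector_onSite hq hq2 hp (by simp))
    ((hf v hv).projector_onSite hq hq2 hp (by simp))
    ((hbc.mul hbd).mul (hac.mul had)) ((hac.mul hbc).mul (had.mul hbd))
    ((hbd.mul hbc).mul (had.mul hac)) ?_ ?_ ?_
  · rw [embedAlong_onPair Sum.inl_injective]
    have hc : Commute (onPair (.inl 1 : Fin 2 ⊕ Fin 2) (.inr 1) (RpM q (u / v)))
        (onPair (.inl 0) (.inr 0) (RpM q (u / p / (v / p)))) :=
      onPair_commute_onPair (by simp) (by simp) (by simp) (by simp) fun _ _ _ _ => Commute.all _ _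
    have h₁ := onPair_yangBaxter_Pm_left hq hp (t := u / v) (s := u / p / v) (div_ne_zero hu hv)
      (by field_simp) (i := (.inl 0 : Fin 2 ⊕ Fin 2)) (j := .inl 1) (k := .inr 1)
      (by simp) (by simp) (by simp)
    have h₂ := onPair_yangBaxter_Pm_left hq hp (t := u / (v / p)) (s := u / p / (v / p))
      (div_ne_zero hu hvp)
      (by field_simp) (i := (.inl 0 : Fin 2 ⊕ Fin 2)) (j := .inl 1) (k := .inr 0)
      (by simp) (by simp) (by simp)
    rw [hc.mul_mul_mul_comm, mul_assoc, h₁, ← mul_assoc, h₂, mul_assoc]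
  · rw [embedAlong_onPair Sum.inr_injective]
    have h₁ := onPair_yangBaxter_Pm_right hq hp (s := u / (v / p)) (t := u / v)
      (div_ne_zero hu hvp) (by field_simp) (i := (.inl 1 : Fin 2 ⊕ Fin 2)) (j := .inr 0)
      (k := .inr 1) (by simp) (by simp) (by simp)
    have h₂ := onPair_yangBaxter_Pm_right hq hp (s := u / p / (v / p)) (t := u / p / v)
      (div_ne_zero hup hvp) (by field_simp) (i := (.inl 0 : Fin 2 ⊕ Fin 2)) (j := .inr 0)
      (k := .inr 1) (by simp) (by simp) (by simp)
    rw [mul_assoc, h₂, ← mul_assoc, h₁, mul_assoc]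
  · simp only [map_mul, embedAlong_mul (Sum.inr_injective (α := Fin 2) (β := Fin 2)),
      embedAlong_mul (Sum.inl_injective (α := Fin 2) (β := Fin 2)),
      embedAlong_onSite Sum.inl_injective, embedAlong_onSite Sum.inr_injective]
    refine exchange_mul_left
      (exchange_mul_right ((hM _ _ hu hvp).exchange_onSite (by simp))
        ((hM _ _ hu hv).exchange_onSite (by simp)) ?_ ?_)
      (exchange_mul_right ((hM _ _ hup hvp).exchange_onSite (by simp))
        ((hM _ _ hup hv).exchange_onSite (by simp)) ?_ ?_) (.mul_left ?_ ?_) (.mul_left ?_ ?_)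
    all_goals exact scalarMatrix_onPair_commute_onSite (by simp) (by simp) _ _

end Commutation

section Monodromy

variable {N : ℕ}

/-- The operators on one tensor factor, as an algebra homomorphism. -/
noncomputable def onSiteHom {ι : Type*} [Fintype ι] [DecidableEq ι] (i : ι) :
    Matrix (Fin 3) (Fin 3) ℂ →ₐ[ℂ] Matrix (ι → Fin 3) (ι → Fin 3) ℂ :=
  AlgHom.ofLinearMap
    { toFun := onSite i
      map_add' := fun X Y => by
        ext x y
        simp only [onSite_apply, Matrix.add_apply]
        split_ifs <;> simp
      map_smul' := fun c X => by
        ext x y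
        simp [onSite_apply] }
    (by
      have h : (Matrix.of fun x y : Fin 1 → Fin 3 =>
          (1 : Matrix (Fin 3) (Fin 3) ℂ) (x 0) (y 0)) = 1 := by
        ext x y
        simp [Matrix.one_apply, funext_iff]
      simp only [LinearMap.coe_mk, AddHom.coe_mk, onSite, h, embedAlong_one])
    (onSite_mul i)

/-- An operator on the auxiliary and quantum spaces, as a matrix over the auxiliary space. -/
noncomputable abbrev auxBlocks (N : ℕ) : Matrix (Fin 3 × HIdx N) (Fin 3 × HIdx N) ℂ ≃+*
    Matrix (Fin 3) (Fin 3) (Matrix (HIdx N) (HIdx N) ℂ) :=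
  (Matrix.compRingEquiv (Fin 3) (HIdx N) ℂ).symm

theorem auxBlocks_apply (X : Matrix (Fin 3 × HIdx N) (Fin 3 × HIdx N) ℂ) (i j : Fin 3)
    (f g : HIdx N) : auxBlocks N X i j f g = X (i, f) (j, g) := rfl

theorem auxBlocks_Kaux (K : Matrix (Fin 3) (Fin 3) ℂ) :
    auxBlocks N (Kaux N K) = scalarMatrix _ _ K := by
  ext i j f g
  simp [auxBlocks_apply, Kaux, Matrix.algebraMap_matrix_apply]

theorem auxBlocks_Raux (q w : ℂ) (b : Fin N) :
    auxBlocks N (Raux N q w b) = (laxMatrix q w).map (onSiteHom b) := by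
  ext i j f g
  change _ = onSite b (laxMatrix q w i j) f g
  rw [onSite_apply]
  simp [auxBlocks_apply, Raux, laxMatrix]

theorem commute_auxBlocks_Raux (q w w' : ℂ) {b b' : Fin N} (hb : b ≠ b') (i j k l : Fin 3) :
    Commute (auxBlocks N (Raux N q w b) i j) (auxBlocks N (Raux N q w' b') k l) := by
  rw [auxBlocks_Raux, auxBlocks_Raux]
  exact onSite_commute_onSite hb fun _ _ _ _ => Commute.all _ _

theorem commute_auxBlocks_Raux_list_prod (q w : ℂ) (x : Fin N → ℂ) {b : Fin N} {l : List (Fin N)}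
    (hb : b ∉ l) (i j k m : Fin 3) : Commute (auxBlocks N (Raux N q w b) i j)
      (auxBlocks N (l.map fun b => Raux N q (x b) b).prod k m) := by
  induction l generalizing k with
  | nil =>
    rw [List.map_nil, List.prod_nil, map_one, Matrix.one_apply]
    split_ifs
    exacts [Commute.one_right _, Commute.zero_right _]
  | cons b' l ih =>
    rw [List.mem_cons, not_or] at hb
    rw [List.map_cons, List.prod_cons, map_mul, Matrix.mul_apply]
    exact Commute.sum_right _ _ _ fun t _ =>
      (commute_auxBlocks_Raux q _ _ hb.1 _ _ _ _).mul_right (ih hb.2 _)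

theorem RLL_auxBlocks_Raux {q s w : ℂ} (hq : q ≠ 0) (hs : s ≠ 0) (hw : w ≠ 0) (b : Fin N) :
    RLL q s (auxBlocks N (Raux N q (s * w) b)) (auxBlocks N (Raux N q w b)) := by
  rw [auxBlocks_Raux, auxBlocks_Raux]
  exact (RLL_laxMatrix hq hs hw).map (onSiteHom b)

theorem RLL_auxBlocks_list_prod {q s : ℂ} (hq : q ≠ 0) (hs : s ≠ 0) {x : Fin N → ℂ}
    (hx : ∀ b, x b ≠ 0) {l : List (Fin N)} (hl : l.Nodup) :
    RLL q s (auxBlocks N (l.map fun b => Raux N q (s * x b) b).prod)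
      (auxBlocks N (l.map fun b => Raux N q (x b) b).prod) := by
  induction l with
  | nil =>
    have h := RLL.of_twist (S := Matrix (HIdx N) (HIdx N) ℂ) (q := q) (w := s) (K := 1)
      (by simp)
    simpa only [List.map_nil, List.prod_nil, map_one] using h
  | cons b l ih =>
    rw [List.nodup_cons] at hl
    simp only [List.map_cons, List.prod_cons, map_mul]
    exact (RLL_auxBlocks_Raux hq hs (hx b) b).mul (ih hl.2)
      (commute_auxBlocks_Raux_list_prod q _ x hl.1)
      fun a b c d => (commute_auxBlocks_Raux_list_prod q _ (fun b => s * x b) hl.1 c d a b).symm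

theorem commute_scalarMatrix_apply {n S : Type*} [Fintype n] [DecidableEq n] [Ring S] [Algebra ℂ S]
    (K : Matrix n n ℂ) (i j : n) (x : S) : Commute (scalarMatrix n S K i j) x :=
  Algebra.commutes (K i j) x

theorem RLL_auxBlocks_Mon {q : ℂ} (hq : q ≠ 0) {ζ : Fin N → ℂ} (hζ : ∀ b, ζ b ≠ 0)
    {K : Matrix (Fin 3) (Fin 3) ℂ}
    (hK : ∀ w : ℂ, w ≠ 0 → RpM q w * (K ⊗ₖ K) = (K ⊗ₖ K) * RpM q w) {u v : ℂ} (hu : u ≠ 0)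
    (hv : v ≠ 0) :
    RLL q (u / v) (auxBlocks N (Mon N q ζ K u)) (auxBlocks N (Mon N q ζ K v)) := by
  have hs : u / v ≠ 0 := div_ne_zero hu hv
  have h := RLL_auxBlocks_list_prod hq hs (fun b => div_ne_zero hv (hζ b))
    (List.nodup_reverse.2 (List.nodup_finRange N))
  simp only [div_mul_div_cancel₀ hv] at h
  rw [Mon, Mon, map_mul, map_mul, auxBlocks_Kaux]
  exact (RLL.of_twist (hK _ hs)).mul h
    (fun _ _ _ _ => commute_scalarMatrix_apply K _ _ _)
    fun _ _ _ _ => (commute_scalarMatrix_apply K _ _ _).symm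

theorem T1_eq_auxTrace (q : ℂ) (ζ : Fin N → ℂ) (K : Matrix (Fin 3) (Fin 3) ℂ) (u : ℂ) :
    T1 N q ζ K u = auxTrace (auxBlocks N (Mon N q ζ K u)) := by
  ext f g
  rw [auxTrace, map_one, one_mul, Matrix.trace,
    ← (Equiv.funUnique (Fin 1) (Fin 3)).symm.sum_comp, Matrix.sum_apply]
  change ∑ i : Fin 3, Mon N q ζ K u (i, f) (i, g) = _
  refine Finset.sum_congr rfl fun i _ => ?_
  rw [Matrix.diag_apply, onSite_apply, if_pos fun _ _ => rfl]
  rfl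

/-- An operator on two auxiliary spaces and the quantum space, as a matrix over the auxiliary
spaces. -/
noncomputable abbrev auxPairBlocks (N : ℕ) :
    Matrix (Fin 3 × Fin 3 × HIdx N) (Fin 3 × Fin 3 × HIdx N) ℂ ≃+*
      Matrix (Fin 3 × Fin 3) (Fin 3 × Fin 3) (Matrix (HIdx N) (HIdx N) ℂ) :=
  (Matrix.reindexAlgEquiv ℂ ℂ (Equiv.prodAssoc _ _ _).symm).toRingEquiv.trans
    (Matrix.compRingEquiv (Fin 3 × Fin 3) (HIdx N) ℂ).symm

theorem auxPairBlocks_apply (X : Matrix (Fin 3 × Fin 3 × HIdx N) (Fin 3 × Fin 3 × HIdx N) ℂ)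
    (i j : Fin 3 × Fin 3) (f g : HIdx N) :
    auxPairBlocks N X i j f g = X (i.1, i.2, f) (j.1, j.2, g) := rfl

theorem auxPairBlocks_embP (P : Matrix (Fin 3 × Fin 3) (Fin 3 × Fin 3) ℂ) :
    auxPairBlocks N (embP N P) = scalarMatrix _ _ P := by
  ext i j f g
  simp [auxPairBlocks_apply, embP, Matrix.algebraMap_matrix_apply]

theorem auxPairBlocks_embB_mul_embA (X Y : Matrix (Fin 3 × HIdx N) (Fin 3 × HIdx N) ℂ) :
    auxPairBlocks N (embB N Y * embA N X) = kronMulRev (auxBlocks N X) (auxBlocks N Y) := by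
  ext i j f g
  simp only [auxPairBlocks_apply, embB, embA, kronMulRev, Matrix.of_apply, Matrix.mul_apply,
    Fintype.sum_prod_type, auxBlocks_apply]
  simp [Finset.sum_ite_irrel]

theorem trace_onPair_zero_one {S : Type*} [Semiring S]
    (X : Matrix (Fin 3 × Fin 3) (Fin 3 × Fin 3) S) :
    (onPair (0 : Fin 2) 1 X).trace = X.trace := by
  rw [Matrix.trace, ← (finTwoArrowEquiv (Fin 3)).symm.sum_comp, Matrix.trace]
  refine Finset.sum_congr rfl fun a _ => ?_
  simp [onPair, embedAlong, finTwoArrowEquiv]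

theorem T2_eq_fusedTrace (q p : ℂ) (ζ : Fin N → ℂ) (K : Matrix (Fin 3) (Fin 3) ℂ) (u : ℂ) :
    T2 N q p ζ K u = fusedTrace q p (auxBlocks N (Mon N q ζ K (u / p)))
      (auxBlocks N (Mon N q ζ K u)) := by
  have h : T2 N q p ζ K u = (auxPairBlocks N (embP N (Pm q p) * embB N (Mon N q ζ K u) *
      embA N (Mon N q ζ K (u / p)))).trace := by
    ext f g
    rw [Matrix.trace, Matrix.sum_apply, Fintype.sum_prod_type]
    rfl
  rw [h, fusedTrace, onSite_mul_onSite' (by simp), scalarMatrix_onPair, ← onPair_mul (by simp),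
    trace_onPair_zero_one, mul_assoc, map_mul, auxPairBlocks_embP, auxPairBlocks_embB_mul_embA]
  rfl

theorem continuousAt_RpM (q : ℂ) {w : ℂ} (hq : q ≠ 0) (hw : w ≠ 0) : ContinuousAt (RpM q) w := by
  have h : ∀ n : ℤ, ContinuousAt (fun w : ℂ => w ^ n) w := fun n =>
    continuousAt_zpow₀ _ _ (.inl hw)
  have hD : ∀ i j, ContinuousAt (fun w => rDiag q w i j) w := by
    intro i j
    unfold rDiag
    split_ifs <;> fun_prop (disch := simp [hq, hw])
  have hS : ∀ i j, ContinuousAt (fun w => rSwap q w i j) w := by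
    intro i j
    unfold rSwap
    split_ifs
    exacts [continuousAt_const.mul (h _), continuousAt_const.mul (h _), continuousAt_const]
  refine continuousAt_pi.2 fun ⟨i, j⟩ => continuousAt_pi.2 fun ⟨k, l⟩ => ?_
  simp only [RpM_apply]
  exact .add (by split_ifs; exacts [hD _ _, continuousAt_const])
    (by split_ifs; exacts [hS _ _, continuousAt_const])

theorem continuousAt_Mon {q : ℂ} (hq : q ≠ 0) {ζ : Fin N → ℂ} (hζ : ∀ b, ζ b ≠ 0)
    (K : Matrix (Fin 3) (Fin 3) ℂ) {u : ℂ} (hu : u ≠ 0) : ContinuousAt (Mon N q ζ K) u := by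
  refine continuousAt_const.mul (tendsto_list_prod _ fun b _ => ?_)
  refine continuousAt_pi.2 fun x => continuousAt_pi.2 fun y =>
    ContinuousAt.mul ?_ continuousAt_const
  have h : ContinuousAt (fun u => RpM q (u / ζ b)) u :=
    ContinuousAt.comp (f := fun u => u / ζ b)
      (continuousAt_RpM q hq (div_ne_zero hu (hζ b))) (continuousAt_id.div_const _)
  exact continuousAt_pi.1 (continuousAt_pi.1 h _) _

theorem continuousAt_T1 {q : ℂ} (hq : q ≠ 0) {ζ : Fin N → ℂ} (hζ : ∀ b, ζ b ≠ 0)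
    (K : Matrix (Fin 3) (Fin 3) ℂ) {u : ℂ} (hu : u ≠ 0) : ContinuousAt (T1 N q ζ K) u := by
  refine continuousAt_pi.2 fun f => continuousAt_pi.2 fun g => ?_
  change ContinuousAt (fun u => ∑ i : Fin 3, Mon N q ζ K u (i, f) (i, g)) u
  exact tendsto_finsetSum _ fun i _ =>
    continuousAt_pi.1 (continuousAt_pi.1 (continuousAt_Mon hq hζ K hu) _) _

theorem continuousAt_T2 {q p : ℂ} (hq : q ≠ 0) (hp : p ≠ 0) {ζ : Fin N → ℂ} (hζ : ∀ b, ζ b ≠ 0)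
    (K : Matrix (Fin 3) (Fin 3) ℂ) {u : ℂ} (hu : u ≠ 0) : ContinuousAt (T2 N q p ζ K) u := by
  have hB : ContinuousAt (fun u => embB N (Mon N q ζ K u)) u :=
    continuousAt_pi.2 fun x => continuousAt_pi.2 fun y => ContinuousAt.mul
      (continuousAt_pi.1 (continuousAt_pi.1 (continuousAt_Mon hq hζ K hu) _) _) continuousAt_const
  have hM : ContinuousAt (fun u => Mon N q ζ K (u / p)) u :=
    ContinuousAt.comp (f := fun u => u / p)
      (continuousAt_Mon hq hζ K (div_ne_zero hu hp)) (continuousAt_id.div_const _)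
  have hA : ContinuousAt (fun u => embA N (Mon N q ζ K (u / p))) u :=
    continuousAt_pi.2 fun x => continuousAt_pi.2 fun y => ContinuousAt.mul
      (continuousAt_pi.1 (continuousAt_pi.1 hM _) _) continuousAt_const
  refine continuousAt_pi.2 fun f => continuousAt_pi.2 fun g => ?_
  change ContinuousAt (fun u => ∑ ia : Fin 3, ∑ ib : Fin 3,
    (embP N (Pm q p) * embB N (Mon N q ζ K u) * embA N (Mon N q ζ K (u / p)))
      (ia, ib, f) (ia, ib, g)) u
  exact tendsto_finsetSum _ fun i _ => tendsto_finsetSum _ fun j _ =>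
    continuousAt_pi.1 (continuousAt_pi.1 ((continuousAt_const.mul hB).mul hA) _) _

open Filter Topology in
theorem eventually_regularSpectral (q : ℂ) {c : ℂ} (hc : c ≠ 0) {u₀ : ℂ} (hu : u₀ ≠ 0) :
    ∀ᶠ u in 𝓝[≠] u₀, RegularSpectral q (u / c) := by
  have h : ∀ k : ℂ, ∀ᶠ u in 𝓝[≠] u₀, (u / c) ^ 6 ≠ k := by
    intro k
    refine nhdsNE_le_cofinite u₀ ((Set.Finite.subset
      ((Polynomial.nthRoots 6 (k * c ^ 6)).toFinset.finite_toSet) fun u hu => ?_))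
    have hu' : (u / c) ^ 6 = k := by simpa using hu
    simp only [Finset.mem_coe, Multiset.mem_toFinset]
    rw [Polynomial.mem_nthRoots (by norm_num), ← hu', div_pow,
      div_mul_cancel₀ _ (pow_ne_zero _ hc)]
  filter_upwards [h (q ^ 2)⁻¹, h (q ^ 2), nhdsWithin_le_nhds (eventually_ne_nhds hu)]
    with u h₁ h₂ h₃
  exact ⟨div_ne_zero h₃ hc, h₁, h₂⟩

open Filter Topology in
theorem Commute.of_eventually_nhdsNE {R : Type*} [Mul R] [TopologicalSpace R] [ContinuousMul R]
    [T2Space R] {f : ℂ → R} {u : ℂ} {b : R} (hf : ContinuousAt f u)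
    (h : ∀ᶠ w in 𝓝[≠] u, Commute (f w) b) : Commute (f u) b :=
  (((hf.mul continuousAt_const).eventuallyEq_nhds_iff_eventuallyEq_nhdsNE
    (continuousAt_const.mul hf)).1 h).eq_of_nhds

end Monodromy

/-- the transfer matrices form a commuting family. -/
theorem transfer_matrices_commute (N : ℕ) (hN : 1 ≤ N) (q p : ℂ)
    (hq : q ≠ 0) (hq2 : q ^ 2 ≠ 1) (hp : p ^ 3 = q)
    (ζ : Fin N → ℂ) (hζ : ∀ b, ζ b ≠ 0) (K : Matrix (Fin 3) (Fin 3) ℂ)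
    (hK : ∀ w : ℂ, w ≠ 0 → RpM q w * (K ⊗ₖ K) = (K ⊗ₖ K) * RpM q w)
    (u v : ℂ) (hu : u ≠ 0) (hv : v ≠ 0) :
    T1 N q ζ K u * T1 N q ζ K v = T1 N q ζ K v * T1 N q ζ K u
    ∧ T1 N q ζ K u * T2 N q p ζ K v = T2 N q p ζ K v * T1 N q ζ K u
    ∧ T2 N q p ζ K u * T2 N q p ζ K v = T2 N q p ζ K v * T2 N q p ζ K u := by
  have hp0 : p ≠ 0 := by rintro rfl; simp_all
  have hvp : v / p ≠ 0 := div_ne_zero hv hp0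
  have hM : ∀ u v : ℂ, u ≠ 0 → v ≠ 0 →
      RLL q (u / v) (auxBlocks N (Mon N q ζ K u)) (auxBlocks N (Mon N q ζ K v)) :=
    fun _ _ => RLL_auxBlocks_Mon hq hζ hK
  have hne := nhdsWithin_le_nhds (s := {u}ᶜ) (eventually_ne_nhds hu)
  have hr : ∀ c : ℂ, c ≠ 0 → _ := fun c hc => eventually_regularSpectral q hc hu
  refine ⟨Commute.of_eventually_nhdsNE (continuousAt_T1 hq hζ K hu) ?_,
    Commute.of_eventually_nhdsNE (continuousAt_T1 hq hζ K hu) ?_,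
    Commute.of_eventually_nhdsNE (continuousAt_T2 hq hp0 hζ K hu) ?_⟩
  · filter_upwards [hne, hr v hv] with w hw h
    rw [T1_eq_auxTrace, T1_eq_auxTrace]
    exact commute_auxTrace_auxTrace (M := fun u => auxBlocks N (Mon N q ζ K u)) hq hM hw hv h
  · filter_upwards [hne, hr v hv, hr (v / p) hvp] with w hw h h'
    rw [T1_eq_auxTrace, T2_eq_fusedTrace]
    exact commute_auxTrace_fusedTrace (M := fun u => auxBlocks N (Mon N q ζ K u)) hq hq2 hp hM hw hv
      h h'
  · filter_upwards [hne, hr v hv, hr (v / p) hvp, hr (p * v) (mul_ne_zero hp0 hv),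
      hr (p * (v / p)) (mul_ne_zero hp0 hvp)] with w hw h h₁ h₂ h₃
    rw [T2_eq_fusedTrace, T2_eq_fusedTrace]
    exact commute_fusedTrace_fusedTrace (M := fun u => auxBlocks N (Mon N q ζ K u)) hq hq2 hp hM hw
      hv h h₁ (by rwa [div_div]) (by rwa [div_div])
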